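/- arXiv:2405.06539 — 4 statements merged into one kernel-verified Lean document; each statement's English description precedes it below -/
import Mathlib

section
/- For the Poisson regression example, the objective F(θ) = −θ + exp(exp(θ) − 1) is not globally L-smooth and not (L₀,L₁)-smooth: there exists no finite constant L such that |F'(θ) − F'(θ')| ≤ L|θ − θ'| for all θ, θ' ∈ ℝ, and there exist no finite constants L₀, L₁ such that |F''(θ)| ≤ L₀ + L₁|F'(θ)| for all θ ∈ ℝ. -/
open Real

/-- The objective function of the Poisson regression example:
F(θ) = E[f(θ,Z)] = −θ + exp(exp(θ) − 1). -/
noncomputable def poissonObjective (θ : ℝ) : ℝ := -θ + Real.exp (Real.exp θ - 1)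

/-!
A function with `L`-Lipschitz derivative is `(L, 0)`-smooth, so it suffices to rule out
`(L₀, L₁)`-smoothness. Since `F'' = (exp θ + 1) * (F' + 1)`, the ratio `F'' / F'` tends to infinity
together with `F''`, and `F''` eventually exceeds every affine function of `|F'|`.
-/

open Filter Asymptotics

section GeneralizedSmooth

variable {𝕜 E : Type*} [NontriviallyNormedField 𝕜] [NormedAddCommGroup E] [NormedSpace 𝕜 E]
  {f : 𝕜 → E}

/-- `(L₀, L₁)`-smoothness, the relaxation of `L`-smoothness in which the second derivative may grow
linearly with the first. It is encoded with `deriv`, which is `0` wherever the derivative does not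
exist. -/
def IsGeneralizedSmooth (f : 𝕜 → E) (L₀ L₁ : ℝ) : Prop :=
  ∀ x, ‖deriv (deriv f) x‖ ≤ L₀ + L₁ * ‖deriv f x‖

theorem isGeneralizedSmooth_of_lipschitzWith_deriv {L : NNReal}
    (hf : LipschitzWith L (deriv f)) : IsGeneralizedSmooth f L 0 := by
  intro x
  simpa only [zero_mul, add_zero] using norm_deriv_le_of_lipschitz hf

theorem not_isGeneralizedSmooth_of_isLittleO {l : Filter 𝕜} [l.NeBot]
    (hderiv : deriv f =o[l] deriv (deriv f))
    (htop : Tendsto (fun x => ‖deriv (deriv f) x‖) l atTop) (L₀ L₁ : ℝ) :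
    ¬ IsGeneralizedSmooth f L₀ L₁ := by
  intro hf
  have hbound : deriv (deriv f) =O[l] fun x => L₀ + L₁ * ‖deriv f x‖ :=
    .of_norm_le fun x => hf x
  have hlittle : (fun x => L₀ + L₁ * ‖deriv f x‖) =o[l] deriv (deriv f) :=
    (isLittleO_const_left.2 (.inr htop)).add (hderiv.norm_left.const_mul_left L₁)
  have hne : ∀ᶠ x in l, deriv (deriv f) x ≠ 0 :=
    (htop.eventually_gt_atTop 0).mono fun _ => norm_pos_iff.1
  exact hbound.not_isLittleO hne.frequently hlittle

end GeneralizedSmooth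

theorem hasDerivAt_poissonObjective (θ : ℝ) :
    HasDerivAt poissonObjective (-1 + exp (exp θ + θ - 1)) θ := by
  have h : HasDerivAt poissonObjective (-1 + exp (exp θ - 1) * exp θ) θ :=
    (hasDerivAt_id' θ).neg.add ((Real.hasDerivAt_exp θ).sub_const 1).exp
  rwa [← exp_add, sub_add_eq_add_sub] at h

theorem deriv_poissonObjective :
    deriv poissonObjective = fun θ => -1 + exp (exp θ + θ - 1) :=
  deriv_eq hasDerivAt_poissonObjective

theorem hasDerivAt_deriv_poissonObjective (θ : ℝ) :
    HasDerivAt (deriv poissonObjective) ((exp θ + 1) * exp (exp θ + θ - 1)) θ := by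
  rw [deriv_poissonObjective, mul_comm]
  exact (((Real.hasDerivAt_exp θ).add (hasDerivAt_id' θ)).sub_const 1).exp.const_add (-1)

theorem deriv_deriv_poissonObjective :
    deriv (deriv poissonObjective) = fun θ => (exp θ + 1) * exp (exp θ + θ - 1) :=
  deriv_eq hasDerivAt_deriv_poissonObjective

theorem tendsto_exp_add_one_atTop : Tendsto (fun θ : ℝ => exp θ + 1) atTop atTop :=
  tendsto_atTop_add_const_right _ 1 tendsto_exp_atTop

theorem tendsto_exp_exp_add_sub_one_atTop :
    Tendsto (fun θ : ℝ => exp (exp θ + θ - 1)) atTop atTop :=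
  tendsto_exp_atTop.comp <|
    tendsto_atTop_add_const_right _ (-1) (tendsto_exp_atTop.atTop_add_atTop tendsto_id)

theorem tendsto_deriv_deriv_poissonObjective_atTop :
    Tendsto (deriv (deriv poissonObjective)) atTop atTop := by
  rw [deriv_deriv_poissonObjective]
  exact tendsto_exp_add_one_atTop.atTop_mul_atTop₀ tendsto_exp_exp_add_sub_one_atTop

theorem deriv_poissonObjective_isLittleO_deriv_deriv :
    deriv poissonObjective =o[atTop] deriv (deriv poissonObjective) := by
  rw [deriv_deriv_poissonObjective, deriv_poissonObjective]
  have hconst : (fun _ => (-1 : ℝ)) =o[atTop] fun θ : ℝ => exp (exp θ + θ - 1) :=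
    isLittleO_const_left.2 (.inr (tendsto_norm_atTop_atTop.comp tendsto_exp_exp_add_sub_one_atTop))
  have hderiv : (fun θ => -1 + exp (exp θ + θ - 1)) =O[atTop] fun θ => exp (exp θ + θ - 1) :=
    hconst.isBigO.add (isBigO_refl _ _)
  have hfactor : (fun _ => (1 : ℝ)) =o[atTop] fun θ : ℝ => exp θ + 1 :=
    isLittleO_const_left.2 (.inr (tendsto_norm_atTop_atTop.comp tendsto_exp_add_one_atTop))
  simpa only [one_mul] using hfactor.mul_isBigO hderiv

theorem not_isGeneralizedSmooth_poissonObjective (L₀ L₁ : ℝ) :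
    ¬ IsGeneralizedSmooth poissonObjective L₀ L₁ :=
  not_isGeneralizedSmooth_of_isLittleO deriv_poissonObjective_isLittleO_deriv_deriv
    (tendsto_norm_atTop_atTop.comp tendsto_deriv_deriv_poissonObjective_atTop) L₀ L₁

/-- The objective F(θ) = −θ + exp(exp(θ)−1) of the Poisson regression
example is not globally L-smooth and not (L₀,L₁)-smooth: there is no constant L such that
|F'(θ) − F'(θ')| ≤ L|θ−θ'| for all θ, θ', and there are no constants L₀, L₁ with
|F''(θ)| ≤ L₀ + L₁|F'(θ)| for all θ. -/
theorem stmt1 :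
    (¬ ∃ L : ℝ, ∀ θ θ' : ℝ,
        |deriv poissonObjective θ - deriv poissonObjective θ'| ≤ L * |θ - θ'|) ∧
    (¬ ∃ L₀ L₁ : ℝ, ∀ θ : ℝ,
        |deriv (deriv poissonObjective) θ| ≤ L₀ + L₁ * |deriv poissonObjective θ|) := by
  constructor
  · rintro ⟨L, hL⟩
    have hlip : LipschitzWith L.toNNReal (deriv poissonObjective) := .of_dist_le' hL
    exact not_isGeneralizedSmooth_poissonObjective _ _
      (isGeneralizedSmooth_of_lipschitzWith_deriv hlip)
  · rintro ⟨L₀, L₁, hL⟩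
    exact not_isGeneralizedSmooth_poissonObjective L₀ L₁ hL
end

section
/- For the Poisson regression example, there exists no finite constant C such that Var(∂_θ f(θ,Z)) ≤ C + C·(F'(θ))² for all θ ∈ ℝ, and there exists no finite constant C such that E[(∂_θ f(θ,Z))²] ≤ C + C·(F'(θ))² for all θ ∈ ℝ; in particular sup_{θ∈ℝ} Var(∂_θ f(θ,Z)) = ∞. -/
open MeasureTheory ProbabilityTheory Real

/-!
By independence `F' θ` is the mean of the gradient `A θ - X * Y`, where `A θ = X * exp (θ * X)`.
Only `A θ` grows with `θ`: subtracting the fixed square-integrable variable `X * Y` at most halves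
its variance, up to an additive constant. Differentiating the moment generating function of a
Poisson variable of rate `r` once and twice gives `E[A θ] = r * exp θ * exp (r * (exp θ - 1))` and
`E[A θ ^ 2] ≥ (r * exp (2 * θ)) ^ 2 * exp (r * (exp (2 * θ) - 1))`. Since
`2 * (exp θ - 1) ≤ exp (2 * θ) - 1`, the second moment is at least `exp (2 * θ) * E[A θ] ^ 2`, so
the ratio of the variance to the squared mean is unbounded.
-/

open Filter
open scoped NNReal

section Variance

variable {Ω : Type*} [MeasurableSpace Ω] {P : Measure Ω} [IsFiniteMeasure P] {U V : Ω → ℝ}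

lemma variance_le_two_mul_variance_sub_add (hU : MemLp U 2 P) (hV : MemLp V 2 P) :
    Var[U; P] ≤ 2 * Var[fun ω ↦ U ω - V ω; P] + 2 * Var[V; P] := by
  have parallelogram : Var[U; P] + Var[U - V - V; P] = 2 * Var[U - V; P] + 2 * Var[V; P] := by
    have hadd := variance_add (hU.sub hV) hV
    rw [sub_add_cancel] at hadd
    linarith [variance_sub (hU.sub hV) hV]
  calc Var[U; P] ≤ Var[U; P] + Var[U - V - V; P] :=
        le_add_of_nonneg_right (variance_nonneg _ P)
    _ = 2 * Var[fun ω ↦ U ω - V ω; P] + 2 * Var[V; P] := parallelogram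

end Variance

section Poisson

variable {Ω : Type*} [MeasurableSpace Ω] {P : Measure Ω} {r : ℝ≥0} {X W : Ω → ℝ}

lemma hasLaw_natCast_poisson_of_forall_measure_eq {N : Ω → ℕ} (hN : Measurable N)
    (h : ∀ k, P {ω | N ω = k} = ENNReal.ofReal (exp (-r) * r ^ k / k.factorial)) :
    HasLaw (fun ω ↦ (N ω : ℝ)) Po(ℝ, r) P := by
  have hN_law : HasLaw N Po(r) P :=
    ⟨hN.aemeasurable, Measure.ext_of_singleton fun k ↦ by
      rw [Measure.map_apply hN (measurableSet_singleton k), poissonMeasure_singleton, ← h k]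
      rfl⟩
  exact HasLaw.fun_comp ⟨.of_discrete, rfl⟩ hN_law

lemma hasSum_poisson_mul_exp_mul (r : ℝ≥0) (t : ℝ) :
    HasSum (fun n : ℕ ↦ exp (-r) * r ^ n / n.factorial * exp (t * n))
      (exp (r * (exp t - 1))) := by
  convert! (NormedSpace.expSeries_div_hasSum_exp (r * exp t)).mul_left (exp (-r)) using 1
  · ext n
    rw [mul_pow, ← exp_nat_mul, mul_comm t]
    ring
  · rw [← exp_eq_exp_ℝ, ← exp_add]
    ring_nf

lemma integrable_exp_mul_poisson (hX : HasLaw X Po(ℝ, r) P) (t : ℝ) :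
    Integrable (fun ω ↦ exp (t * X ω)) P := by
  have h : Integrable (fun x : ℝ ↦ exp (t * x)) Po(ℝ, r) := by
    rw [integrable_map_measure (by fun_prop) .of_discrete, integrable_poissonMeasure_iff]
    simpa only [Function.comp_apply, norm_eq_abs, abs_exp]
      using (hasSum_poisson_mul_exp_mul r t).summable
  rw [← hX.map_eq] at h
  exact h.comp_aemeasurable hX.aemeasurable

lemma integrableExpSet_poisson (hX : HasLaw X Po(ℝ, r) P) : integrableExpSet X P = Set.univ :=
  Set.eq_univ_of_forall (integrable_exp_mul_poisson hX)

lemma mem_interior_integrableExpSet_poisson (hX : HasLaw X Po(ℝ, r) P) (t : ℝ) :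
    t ∈ interior (integrableExpSet X P) := by
  simp [integrableExpSet_poisson hX]

lemma mgf_poisson (hX : HasLaw X Po(ℝ, r) P) (t : ℝ) :
    mgf X P t = exp (r * (exp t - 1)) := by
  rw [← mgf_id_map hX.aemeasurable, hX.map_eq, mgf, integral_map .of_discrete (by fun_prop),
    integral_poissonMeasure]
  exact (hasSum_poisson_mul_exp_mul r t).tsum_eq

lemma integral_mul_exp_mul_poisson (hX : HasLaw X Po(ℝ, r) P) (t : ℝ) :
    ∫ ω, X ω * exp (t * X ω) ∂P = r * exp t * exp (r * (exp t - 1)) := by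
  rw [← deriv_mgf (mem_interior_integrableExpSet_poisson hX t), funext (mgf_poisson hX)]
  refine HasDerivAt.deriv ?_
  convert! (((hasDerivAt_exp t).sub_const 1).const_mul (r : ℝ)).exp using 1
  ring

lemma integral_sq_mul_exp_mul_poisson (hX : HasLaw X Po(ℝ, r) P) (t : ℝ) :
    ∫ ω, X ω ^ 2 * exp (t * X ω) ∂P =
      (r * exp t + (r * exp t) ^ 2) * exp (r * (exp t - 1)) := by
  have h := hasDerivAt_integral_pow_mul_exp_real (mem_interior_integrableExpSet_poisson hX t) 1
  simp only [pow_one, integral_mul_exp_mul_poisson hX] at h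
  refine h.unique ?_
  convert! ((hasDerivAt_exp t).const_mul (r : ℝ)).mul
    (((hasDerivAt_exp t).sub_const 1).const_mul (r : ℝ)).exp using 1
  ring

lemma integral_poisson (hX : HasLaw X Po(ℝ, r) P) : ∫ ω, X ω ∂P = r := by
  simpa using integral_mul_exp_mul_poisson hX 0

lemma sq_mul_exp_mul (x t : ℝ) : (x * exp (t * x)) ^ 2 = x ^ 2 * exp (2 * t * x) := by
  rw [mul_pow, ← exp_nat_mul]
  push_cast
  ring_nf

lemma memLp_two_mul_exp_mul_poisson (hX : HasLaw X Po(ℝ, r) P) (t : ℝ) :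
    MemLp (fun ω ↦ X ω * exp (t * X ω)) 2 P := by
  have hXm := hX.aemeasurable
  rw [memLp_two_iff_integrable_sq (by fun_prop)]
  simpa only [sq_mul_exp_mul] using integrable_pow_mul_exp_of_mem_interior_integrableExpSet
    (mem_interior_integrableExpSet_poisson hX (2 * t)) 2

lemma exp_two_mul_mul_sq_integral_le_integral_sq_poisson (hX : HasLaw X Po(ℝ, r) P) (t : ℝ) :
    exp (2 * t) * (∫ ω, X ω * exp (t * X ω) ∂P) ^ 2 ≤ ∫ ω, (X ω * exp (t * X ω)) ^ 2 ∂P := by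
  have exp_double : exp (2 * t) = exp t ^ 2 := by rw [← exp_nat_mul, Nat.cast_ofNat]
  have exponent_le : 2 * (r * (exp t - 1)) ≤ r * (exp (2 * t) - 1) := by
    rw [exp_double, mul_left_comm]
    gcongr
    linarith [sq_nonneg (exp t - 1)]
  simp only [sq_mul_exp_mul]
  rw [integral_mul_exp_mul_poisson hX, integral_sq_mul_exp_mul_poisson hX]
  calc exp (2 * t) * (r * exp t * exp (r * (exp t - 1))) ^ 2
      = (r * exp (2 * t)) ^ 2 * exp (2 * (r * (exp t - 1))) := by
        rw [mul_pow, ← exp_nat_mul _ 2, exp_double, Nat.cast_ofNat]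
        ring
    _ ≤ (r * exp (2 * t) + (r * exp (2 * t)) ^ 2) * exp (r * (exp (2 * t) - 1)) := by
        gcongr
        exact le_add_of_nonneg_left (by positivity)

lemma exp_two_mul_sub_one_mul_sq_integral_le_variance_poisson (hX : HasLaw X Po(ℝ, r) P) (t : ℝ) :
    (exp (2 * t) - 1) * (∫ ω, X ω * exp (t * X ω) ∂P) ^ 2 ≤
      Var[fun ω ↦ X ω * exp (t * X ω); P] := by
  have := hX.isProbabilityMeasure
  rw [variance_eq_sub (memLp_two_mul_exp_mul_poisson hX t), sub_one_mul]
  exact sub_le_sub_right (exp_two_mul_mul_sq_integral_le_integral_sq_poisson hX t) _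

lemma tendsto_integral_mul_exp_mul_poisson_atTop (hr : r ≠ 0) (hX : HasLaw X Po(ℝ, r) P) :
    Tendsto (fun t ↦ ∫ ω, X ω * exp (t * X ω) ∂P) atTop atTop := by
  have hr_pos : (0 : ℝ) < r := by positivity
  simp only [integral_mul_exp_mul_poisson hX]
  refine (tendsto_exp_atTop.const_mul_atTop hr_pos).atTop_mul_atTop₀
    (tendsto_exp_atTop.comp (Tendsto.const_mul_atTop hr_pos ?_))
  exact tendsto_atTop_add_const_right _ _ tendsto_exp_atTop

theorem tendsto_variance_div_one_add_sq_integral_poisson (hr : r ≠ 0)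
    (hX : HasLaw X Po(ℝ, r) P) (hW : MemLp W 2 P) :
    Tendsto (fun t ↦ Var[fun ω ↦ X ω * exp (t * X ω) - W ω; P] /
      (1 + (∫ ω, (X ω * exp (t * X ω) - W ω) ∂P) ^ 2)) atTop atTop := by
  have := hX.isProbabilityMeasure
  set m : ℝ → ℝ := fun t ↦ ∫ ω, X ω * exp (t * X ω) ∂P
  set w := ∫ ω, W ω ∂P
  set a : ℝ → ℝ := fun t ↦ (exp (2 * t) - 1) / 2 - Var[W; P]
  have ha : Tendsto a atTop atTop :=
    tendsto_atTop_add_const_right _ _ <| (tendsto_atTop_add_const_right _ _ <|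
      tendsto_exp_atTop.comp <| tendsto_id.const_mul_atTop two_pos).atTop_div_const two_pos
  refine tendsto_atTop_mono' _ ?_ (ha.atTop_div_const (by positivity : 0 < 3 + 2 * w ^ 2))
  filter_upwards [(tendsto_integral_mul_exp_mul_poisson_atTop hr hX).eventually_ge_atTop 1]
    with t hm
  have hA := memLp_two_mul_exp_mul_poisson hX t
  have hmsq : 1 ≤ m t ^ 2 := one_le_pow₀ hm
  have variance_ge : a t * m t ^ 2 ≤ Var[fun ω ↦ X ω * exp (t * X ω) - W ω; P] := by
    have halving : (exp (2 * t) - 1) * m t ^ 2 ≤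
        2 * Var[fun ω ↦ X ω * exp (t * X ω) - W ω; P] + 2 * Var[W; P] :=
      (exp_two_mul_sub_one_mul_sq_integral_le_variance_poisson hX t).trans
        (variance_le_two_mul_variance_sub_add hA hW)
    have variance_le := le_mul_of_one_le_right (variance_nonneg W P) hmsq
    calc a t * m t ^ 2 = (exp (2 * t) - 1) * m t ^ 2 / 2 - Var[W; P] * m t ^ 2 := by ring
      _ ≤ Var[fun ω ↦ X ω * exp (t * X ω) - W ω; P] := by linarith
  have mean_sq_le : 1 + (∫ ω, (X ω * exp (t * X ω) - W ω) ∂P) ^ 2 ≤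
      (3 + 2 * w ^ 2) * m t ^ 2 := by
    rw [integral_sub (hA.integrable one_le_two) (hW.integrable one_le_two)]
    nlinarith [sq_nonneg (m t + w), le_mul_of_one_le_right (sq_nonneg w) hmsq]
  calc a t / (3 + 2 * w ^ 2) = a t * m t ^ 2 / ((3 + 2 * w ^ 2) * m t ^ 2) := by
        rw [mul_div_mul_right _ _ (by positivity)]
    _ ≤ _ := by
        gcongr
        exact variance_nonneg _ P

end Poisson

section Regression

variable {Ω : Type*} [MeasurableSpace Ω] {P : Measure Ω} {r s : ℝ≥0} {X Y : Ω → ℝ}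

lemma memLp_two_mul_poisson (hX : HasLaw X Po(ℝ, r) P) (hY : HasLaw Y Po(ℝ, s) P) :
    MemLp (fun ω ↦ X ω * Y ω) 2 P := by
  have : ENNReal.HolderTriple ↑(4 : ℝ≥0) ↑(4 : ℝ≥0) 2 :=
    .of_toReal ⟨by norm_num, by norm_num, by norm_num⟩
  exact (memLp_of_mem_interior_integrableExpSet (mem_interior_integrableExpSet_poisson hY 0) 4).mul'
    (memLp_of_mem_interior_integrableExpSet (mem_interior_integrableExpSet_poisson hX 0) 4)

lemma integral_poissonRegression_gradient (hX : HasLaw X Po(ℝ, r) P)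
    (hY : HasLaw Y Po(ℝ, s) P) (hXY : IndepFun X Y P) (θ : ℝ) :
    ∫ ω, (-X ω * Y ω + X ω * exp (θ * X ω)) ∂P =
      -(r * s) + r * exp θ * exp (r * (exp θ - 1)) := by
  have integral_mul : ∫ ω, X ω * Y ω ∂P = r * s := by
    rw [hXY.integral_fun_mul_eq_mul_integral hX.aemeasurable.aestronglyMeasurable
      hY.aemeasurable.aestronglyMeasurable, integral_poisson hX, integral_poisson hY]
  have := hX.isProbabilityMeasure
  simp only [neg_mul, neg_add_eq_sub]
  rw [integral_sub ((memLp_two_mul_exp_mul_poisson hX θ).integrable one_le_two)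
    ((memLp_two_mul_poisson hX hY).integrable one_le_two), integral_mul,
    integral_mul_exp_mul_poisson hX]

theorem stmt2_general (hr : r ≠ 0) (hX : HasLaw X Po(ℝ, r) P)
    (hXY : MemLp (fun ω ↦ X ω * Y ω) 2 P) (g : ℝ → Ω → ℝ)
    (hg : ∀ θ ω, g θ ω = -X ω * Y ω + X ω * exp (θ * X ω))
    (F' : ℝ → ℝ) (hF' : ∀ θ, F' θ = ∫ ω, g θ ω ∂P) :
    (¬ ∃ C : ℝ, ∀ θ, Var[g θ; P] ≤ C + C * F' θ ^ 2) ∧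
    (¬ ∃ C : ℝ, ∀ θ, ∫ ω, g θ ω ^ 2 ∂P ≤ C + C * F' θ ^ 2) ∧
    (∀ C : ℝ, ∃ θ, C < Var[g θ; P]) := by
  have := hX.isProbabilityMeasure
  have g_eq (θ : ℝ) : g θ = fun ω ↦ X ω * exp (θ * X ω) - X ω * Y ω := by
    ext ω
    rw [hg]
    ring
  have g_memLp (θ : ℝ) : MemLp (g θ) 2 P := g_eq θ ▸ (memLp_two_mul_exp_mul_poisson hX θ).sub hXY
  have variance_gt (C : ℝ) : ∃ θ, C + C * F' θ ^ 2 < Var[g θ; P] := by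
    obtain ⟨θ, hθ⟩ := ((tendsto_variance_div_one_add_sq_integral_poisson hr hX
      hXY).eventually_gt_atTop C).exists
    rw [← g_eq, lt_div_iff₀ (by positivity), mul_one_add] at hθ
    exact ⟨θ, by simpa only [hF', g_eq] using hθ⟩
  refine ⟨fun ⟨C, hC⟩ ↦ ?_, fun ⟨C, hC⟩ ↦ ?_, fun C ↦ ?_⟩
  · obtain ⟨θ, hθ⟩ := variance_gt C
    exact (hC θ).not_gt hθ
  · obtain ⟨θ, hθ⟩ := variance_gt C
    exact ((variance_le_expectation_sq (g_memLp θ).aestronglyMeasurable).trans (hC θ)).not_gt hθ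
  · obtain ⟨θ, hθ⟩ := variance_gt |C|
    exact ⟨θ, ((le_abs_self C).trans (le_add_of_nonneg_right (by positivity))).trans_lt hθ⟩

end Regression

/-- For the Poisson regression example (X, Y independent Poisson(1),
∂_θ f(θ,(x,y)) = −x·y + x·exp(θ·x), F'(θ) = −1 + exp(exp(θ)+θ−1)): there is no constant C
such that Var(∂_θ f(θ,Z)) ≤ C + C·F'(θ)² for all θ, there is no constant C such that
E[(∂_θ f(θ,Z))²] ≤ C + C·F'(θ)² for all θ, and sup_θ Var(∂_θ f(θ,Z)) = ∞. -/
theorem stmt2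
    {Ω : Type*} [MeasureSpace Ω] [IsProbabilityMeasure (ℙ : Measure Ω)]
    (X Y : Ω → ℕ) (hXm : Measurable X) (hYm : Measurable Y)
    (hindep : IndepFun X Y ℙ)
    (hX : ∀ k : ℕ, ℙ {ω | X ω = k} = ENNReal.ofReal (Real.exp (-1) / (Nat.factorial k)))
    (hY : ∀ k : ℕ, ℙ {ω | Y ω = k} = ENNReal.ofReal (Real.exp (-1) / (Nat.factorial k)))
    (g : ℝ → Ω → ℝ)
    (hg : ∀ θ : ℝ, ∀ ω : Ω,
      g θ ω = -(X ω : ℝ) * (Y ω : ℝ) + (X ω : ℝ) * Real.exp (θ * (X ω : ℝ)))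
    (F' : ℝ → ℝ) (hF' : ∀ θ : ℝ, F' θ = -1 + Real.exp (Real.exp θ + θ - 1)) :
    (¬ ∃ C : ℝ, ∀ θ : ℝ, variance (g θ) ℙ ≤ C + C * (F' θ) ^ 2) ∧
    (¬ ∃ C : ℝ, ∀ θ : ℝ, (∫ ω, (g θ ω) ^ 2 ∂ℙ) ≤ C + C * (F' θ) ^ 2) ∧
    (∀ C : ℝ, ∃ θ : ℝ, C < variance (g θ) ℙ) := by
  have hXlaw := hasLaw_natCast_poisson_of_forall_measure_eq (r := 1) hXm (by simpa using hX)
  have hYlaw := hasLaw_natCast_poisson_of_forall_measure_eq (r := 1) hYm (by simpa using hY)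
  refine stmt2_general one_ne_zero hXlaw (memLp_two_mul_poisson hXlaw hYlaw) g hg F' fun θ ↦ ?_
  simp only [hg, hF']
  rw [integral_poissonRegression_gradient hXlaw hYlaw (hindep.comp .of_discrete .of_discrete)]
  simp only [NNReal.coe_one, one_mul, ← exp_add]
  ring_nf
end

section
/- Let g : ℝ^d → ℝ be differentiable, x₀ ∈ ℝ^d, and let (x_t)_{t≥0} be defined by x_t = x_{t−1} − v_t·∇g(x_{t−1}) for step sizes (v_t)_{t≥1} satisfying, for some constant c > 0, g(x_t) ≤ g(x_{t−1}) − (v_t/2)·‖∇g(x_{t−1})‖² and v_t ≥ c for all t ≥ 1. Suppose there is a convex set K ⊆ ℝ^d such that x_t ∈ K for all t ≥ 0, g is convex on K, and there exists x⋆ ∈ K with g(x⋆) = inf_{x∈K} g(x). Then g(x_T) − g(x⋆) ≤ ‖x₀ − x⋆‖² / (2cT) for every T ≥ 1. -/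
open Filter

/-!
Expanding `‖x - w • p - z‖ ^ 2` for a subgradient `p` of `f` at `x` leaves an excess
`w ^ 2 * ‖p‖ ^ 2`, which is exactly `2 * w` times the sufficient decrease `w / 2 * ‖p‖ ^ 2`. Hence
`2 * w` times the new gap `f (x - w • p) - f z` is at most the drop in squared distance to `z`.
These drops telescope, and since `f` decreases along the iterates the last gap is at most every
earlier one.
-/

section FirstOrderCondition

variable {E : Type*}

theorem add_apply_sub_le_of_convexOn [NormedAddCommGroup E] [NormedSpace ℝ E] {K : Set E}
    {f : E → ℝ} {f' : E →L[ℝ] ℝ} {x y : E} (hf : ConvexOn ℝ K f) (hx : x ∈ K) (hy : y ∈ K)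
    (hf' : HasFDerivWithinAt f f' K x) : f x + f' (y - x) ≤ f y := by
  let line : ℝ →ᵃ[ℝ] E := AffineMap.lineMap x y
  have hderiv : HasDerivWithinAt (f ∘ line) (f' (y - x)) (line ⁻¹' K) 0 :=
    hf'.comp_hasDerivWithinAt_of_eq 0 AffineMap.hasDerivWithinAt_lineMap (Set.mapsTo_preimage _ _)
      (AffineMap.lineMap_apply_zero x y).symm
  have hslope : f' (y - x) ≤ slope (f ∘ line) 0 1 :=
    (hf.comp_affineMap line).le_slope_of_hasDerivWithinAt (by simpa [line]) (by simpa [line])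
      zero_lt_one hderiv
  have hslope_eq : slope (f ∘ line) 0 1 = f y - f x := by simp [slope_def_field, line]
  linarith

theorem add_inner_sub_le_of_convexOn [NormedAddCommGroup E] [InnerProductSpace ℝ E]
    [CompleteSpace E] {K : Set E} {f : E → ℝ} {p x y : E} (hf : ConvexOn ℝ K f) (hx : x ∈ K)
    (hy : y ∈ K) (hp : HasGradientWithinAt f p K x) : f x + inner ℝ p (y - x) ≤ f y := by
  simpa only [InnerProductSpace.toDual_apply_apply] using
    add_apply_sub_le_of_convexOn hf hx hy hp.hasFDerivWithinAt

end FirstOrderCondition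

section Descent

variable {E : Type*} [SeminormedAddCommGroup E] [InnerProductSpace ℝ E] {f : E → ℝ}

theorem norm_sub_smul_sub_sq (x p z : E) (w : ℝ) :
    ‖x - w • p - z‖ ^ 2 = ‖x - z‖ ^ 2 + 2 * w * inner ℝ p (z - x) + w ^ 2 * ‖p‖ ^ 2 := by
  rw [sub_right_comm, norm_sub_sq_real, real_inner_smul_right, real_inner_comm, ← neg_sub z x,
    inner_neg_right, norm_smul, mul_pow, Real.norm_eq_abs, sq_abs]
  ring

theorem two_mul_mul_sub_add_norm_sq_le_of_subgradient_step {x p z : E} {w : ℝ} (hw : 0 ≤ w)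
    (hp : f x + inner ℝ p (z - x) ≤ f z)
    (hdec : f (x - w • p) ≤ f x - w / 2 * ‖p‖ ^ 2) :
    2 * w * (f (x - w • p) - f z) + ‖x - w • p - z‖ ^ 2 ≤ ‖x - z‖ ^ 2 := by
  have hgap : f (x - w • p) - f z ≤ -inner ℝ p (z - x) - w / 2 * ‖p‖ ^ 2 := by linarith
  calc
    2 * w * (f (x - w • p) - f z) + ‖x - w • p - z‖ ^ 2
      ≤ 2 * w * (-inner ℝ p (z - x) - w / 2 * ‖p‖ ^ 2) + ‖x - w • p - z‖ ^ 2 := by gcongr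
    _ = ‖x - z‖ ^ 2 := by rw [norm_sub_smul_sub_sq]; ring

variable {x p : ℕ → E} {w : ℕ → ℝ} {z : E}

theorem two_mul_sum_mul_sub_add_norm_sq_le_of_subgradient_descent (hw : ∀ t, 0 ≤ w t)
    (hstep : ∀ t, x (t + 1) = x t - w t • p t)
    (hdec : ∀ t, f (x (t + 1)) ≤ f (x t) - w t / 2 * ‖p t‖ ^ 2)
    (hp : ∀ t, f (x t) + inner ℝ (p t) (z - x t) ≤ f z) (T : ℕ) :
    2 * (∑ t ∈ Finset.range T, w t) * (f (x T) - f z) + ‖x T - z‖ ^ 2 ≤ ‖x 0 - z‖ ^ 2 := by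
  induction T with
  | zero => simp
  | succ T ih =>
    have hsum : 0 ≤ ∑ t ∈ Finset.range T, w t := Finset.sum_nonneg fun t _ => hw t
    have hmono : f (x (T + 1)) ≤ f (x T) :=
      (hdec T).trans (sub_le_self _ (mul_nonneg (div_nonneg (hw T) zero_le_two) (sq_nonneg _)))
    have hnew : 2 * w T * (f (x (T + 1)) - f z) + ‖x (T + 1) - z‖ ^ 2 ≤ ‖x T - z‖ ^ 2 := by
      rw [hstep T]
      exact two_mul_mul_sub_add_norm_sq_le_of_subgradient_step (hw T) (hp T) (hstep T ▸ hdec T)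
    calc
      2 * (∑ t ∈ Finset.range (T + 1), w t) * (f (x (T + 1)) - f z) + ‖x (T + 1) - z‖ ^ 2
        = 2 * (∑ t ∈ Finset.range T, w t) * (f (x (T + 1)) - f z)
            + (2 * w T * (f (x (T + 1)) - f z) + ‖x (T + 1) - z‖ ^ 2) := by
          rw [Finset.sum_range_succ]; ring
      _ ≤ 2 * (∑ t ∈ Finset.range T, w t) * (f (x T) - f z) + ‖x T - z‖ ^ 2 := by gcongr
      _ ≤ ‖x 0 - z‖ ^ 2 := ih

theorem sub_le_norm_sq_div_two_mul_sum_of_subgradient_descent (hw : ∀ t, 0 ≤ w t)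
    (hstep : ∀ t, x (t + 1) = x t - w t • p t)
    (hdec : ∀ t, f (x (t + 1)) ≤ f (x t) - w t / 2 * ‖p t‖ ^ 2)
    (hp : ∀ t, f (x t) + inner ℝ (p t) (z - x t) ≤ f z) {T : ℕ}
    (hsum : 0 < ∑ t ∈ Finset.range T, w t) :
    f (x T) - f z ≤ ‖x 0 - z‖ ^ 2 / (2 * ∑ t ∈ Finset.range T, w t) := by
  rw [le_div_iff₀' (by positivity)]
  exact (le_add_of_nonneg_right (sq_nonneg _)).trans
    (two_mul_sum_mul_sub_add_norm_sq_le_of_subgradient_descent hw hstep hdec hp T)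

end Descent

theorem stmt12_general {E : Type*} [NormedAddCommGroup E] [InnerProductSpace ℝ E]
    [CompleteSpace E] {K : Set E} {g : E → ℝ} (hconv : ConvexOn ℝ K g)
    {x p : ℕ → E} {v : ℕ → ℝ} {c : ℝ} (hc : 0 < c) (hxK : ∀ t, x t ∈ K)
    (hgrad : ∀ t, HasGradientWithinAt g (p t) K (x t))
    (hupd : ∀ t, x (t + 1) = x t - v t • p t)
    (hdec : ∀ t, g (x (t + 1)) ≤ g (x t) - v t / 2 * ‖p t‖ ^ 2)
    (hv : ∀ t, c ≤ v t) {z : E} (hz : z ∈ K) {T : ℕ} (hT : 1 ≤ T) :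
    g (x T) - g z ≤ ‖x 0 - z‖ ^ 2 / (2 * c * T) := by
  have hcT : 0 < c * T := mul_pos hc (Nat.cast_pos.2 hT)
  have hsum : c * T ≤ ∑ t ∈ Finset.range T, v t := by
    simpa [mul_comm] using Finset.card_nsmul_le_sum (Finset.range T) v c fun t _ => hv t
  calc
    g (x T) - g z ≤ ‖x 0 - z‖ ^ 2 / (2 * ∑ t ∈ Finset.range T, v t) :=
      sub_le_norm_sq_div_two_mul_sum_of_subgradient_descent (fun t => hc.le.trans (hv t)) hupd hdec
        (fun t => add_inner_sub_le_of_convexOn hconv (hxK t) hz (hgrad t)) (hcT.trans_le hsum)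
    _ ≤ ‖x 0 - z‖ ^ 2 / (2 * (c * T)) := by gcongr
    _ = ‖x 0 - z‖ ^ 2 / (2 * c * T) := by rw [mul_assoc]

/-- convergence of gradient descent with lower-bounded step sizes
satisfying sufficient decrease. Let g : ℝ^d → ℝ be differentiable, and let
x_t = x_{t−1} − v_t∇g(x_{t−1}) with g(x_t) ≤ g(x_{t−1}) − (v_t/2)‖∇g(x_{t−1})‖² and
v_t ≥ c > 0 for all t ≥ 1. If all iterates stay in a convex set K on which g is convex and
g attains its infimum over K at x⋆ ∈ K, then g(x_T) − g(x⋆) ≤ ‖x₀ − x⋆‖²/(2cT) for all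
T ≥ 1. -/
theorem stmt12 {d : ℕ}
    (g : EuclideanSpace ℝ (Fin d) → ℝ) (hg : Differentiable ℝ g)
    (x : ℕ → EuclideanSpace ℝ (Fin d)) (v : ℕ → ℝ) (c : ℝ) (hc : 0 < c)
    (hupd : ∀ t : ℕ, 1 ≤ t → x t = x (t - 1) - v t • gradient g (x (t - 1)))
    (hdec : ∀ t : ℕ, 1 ≤ t →
      g (x t) ≤ g (x (t - 1)) - v t / 2 * ‖gradient g (x (t - 1))‖ ^ 2)
    (hv : ∀ t : ℕ, 1 ≤ t → c ≤ v t)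
    (K : Set (EuclideanSpace ℝ (Fin d))) (hK : Convex ℝ K)
    (hxK : ∀ t : ℕ, x t ∈ K)
    (hconv : ConvexOn ℝ K g)
    (xstar : EuclideanSpace ℝ (Fin d)) (hxstar : xstar ∈ K)
    (hmin : ∀ y ∈ K, g xstar ≤ g y) :
    ∀ T : ℕ, 1 ≤ T → g (x T) - g xstar ≤ ‖x 0 - xstar‖ ^ 2 / (2 * c * T) :=
  fun _ => stmt12_general hconv hc hxK (fun _ => (hg _).hasGradientAt.hasFDerivAt.hasFDerivWithinAt)
    (fun t => hupd _ t.succ_pos) (fun t => hdec _ t.succ_pos) (fun t => hv _ t.succ_pos) hxstar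
end

section
/- Let g : ℝ^d → ℝ be differentiable, x₀ ∈ ℝ^d, β ∈ (0,1), and let the iterates be x_t = x_{t−1} − v_t·∇g(x_{t−1}), where v_t = β^{k_t} with k_t the smallest k ∈ ℕ₀ satisfying the backtracking (Armijo) condition g(x_{t−1} − β^k·∇g(x_{t−1})) ≤ g(x_{t−1}) − (β^k/2)·‖∇g(x_{t−1})‖². Let K̃ ⊆ ℝ^d be a convex set containing the sublevel set {x ∈ ℝ^d : g(x) ≤ g(x₀)}, and let K = { x ∈ ℝ^d : ∃ x' ∈ K̃ with ‖x − x'‖ ≤ sup_{x̃∈K̃} ‖∇g(x̃)‖ }. If g is convex on K and there is a constant L_K ∈ [1,∞) with ‖∇g(x) − ∇g(x')‖ ≤ L_K·‖x − x'‖ for all x, x' ∈ K, then for every t ≥ 1 the backtracking step is well defined and satisfies v_t ≥ β/L_K, and g(x_t) ≤ g(x_{t−1}) − (v_t/2)·‖∇g(x_{t−1})‖². -/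
/-- The set of exponents k for which the Armijo (backtracking) condition holds at `y`
with candidate step size β^k:  g(y − β^k∇g(y)) ≤ g(y) − (β^k/2)‖∇g(y)‖². -/
def armijoSet {d : ℕ} (g : EuclideanSpace ℝ (Fin d) → ℝ) (β : ℝ)
    (y : EuclideanSpace ℝ (Fin d)) : Set ℕ :=
  {k : ℕ | g (y - β ^ k • gradient g y) ≤ g y - β ^ k / 2 * ‖gradient g y‖ ^ 2}

/-- The backtracking line search step size at `y`: β^k with k the smallest natural number
satisfying the Armijo condition (junk value β^0 if no such k exists). -/
noncomputable def btStep {d : ℕ} (g : EuclideanSpace ℝ (Fin d) → ℝ) (β : ℝ)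
    (y : EuclideanSpace ℝ (Fin d)) : ℝ :=
  β ^ sInf (armijoSet g β y)

/-- The iterates of gradient descent with backtracking line search started at `x0`. -/
noncomputable def btIter {d : ℕ} (g : EuclideanSpace ℝ (Fin d) → ℝ) (β : ℝ)
    (x0 : EuclideanSpace ℝ (Fin d)) : ℕ → EuclideanSpace ℝ (Fin d)
  | 0 => x0
  | (t + 1) => btIter g β x0 t - btStep g β (btIter g β x0 t) • gradient g (btIter g β x0 t)

/-!
The descent lemma bounds `g (y - v • ∇ g y)` by `g y - v * (1 - v * L / 2) * ‖∇ g y‖ ^ 2`, so every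
step size `v ≤ 1 / L` satisfies the Armijo condition. The line search therefore terminates, and if
it accepts `v < 1`, the rejected size `v / β` exceeds `1 / L`. Since an accepted step decreases
`g`, the iterates stay in the initial sublevel set, where the local gradient estimates apply again.
-/

section GeometricSearch

variable {β c : ℝ} {S : Set ℕ}

theorem nonempty_of_forall_pow_le (hc : 0 < c) (hβ : β < 1) (hS : ∀ k : ℕ, β ^ k ≤ c → k ∈ S) :
    S.Nonempty :=
  let ⟨k, hk⟩ := exists_pow_lt_of_lt_one hc hβ
  ⟨k, hS k hk.le⟩

theorem mul_le_pow_sInf_of_forall_pow_le (hβ : 0 ≤ β) (hβc : β * c ≤ 1)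
    (hS : ∀ k : ℕ, β ^ k ≤ c → k ∈ S) : β * c ≤ β ^ sInf S := by
  rcases hk : sInf S with _ | k
  · rwa [pow_zero]
  · have hrejected : k ∉ S := Nat.notMem_of_lt_sInf (hk ▸ k.lt_succ_self)
    have hlt : c < β ^ k := not_le.1 fun hle ↦ hrejected (hS k hle)
    rw [pow_succ']
    exact mul_le_mul_of_nonneg_left hlt.le hβ

end GeometricSearch

theorem segment_sub_subset_setOf_norm_sub_le_iSup {E : Type*} [SeminormedAddCommGroup E]
    [NormedSpace ℝ E] (F : E → E) {S : Set E} {y : E} (hy : y ∈ S) :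
    segment ℝ y (y - F y) ⊆
      {x | ∃ x' ∈ S, ENNReal.ofReal ‖x - x'‖ ≤ ⨆ z : S, ENNReal.ofReal ‖F z‖} := by
  intro x hx
  have hnorm : ‖x - y‖ ≤ ‖F y‖ := by
    simpa only [sub_sub_cancel_left, norm_neg] using norm_sub_le_of_mem_segment hx
  exact ⟨y, hy, (ENNReal.ofReal_le_ofReal hnorm).trans
    (le_iSup (fun z : S ↦ ENNReal.ofReal ‖F z‖) ⟨y, hy⟩)⟩

section Armijo

open scoped Gradient RealInnerProductSpace

variable {E : Type*} [NormedAddCommGroup E] [InnerProductSpace ℝ E] [CompleteSpace E]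
  {g : E → ℝ} {y z : E} {β v L : ℝ}

theorem le_add_inner_gradient_add_sq_of_norm_gradient_sub_le
    (hg : ∀ w ∈ segment ℝ y z, DifferentiableAt ℝ g w)
    (hL : ∀ w ∈ segment ℝ y z, ‖∇ g w - ∇ g y‖ ≤ L * ‖w - y‖) :
    g z ≤ g y + ⟪∇ g y, z - y⟫ + L / 2 * ‖z - y‖ ^ 2 := by
  let γ : ℝ → E := AffineMap.lineMap y z
  let q : ℝ → ℝ := fun s ↦ g y + (s * ⟪∇ g y, z - y⟫ + s ^ 2 * (L / 2 * ‖z - y‖ ^ 2))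
  have hγ_mem {s : ℝ} (hs : s ∈ Set.Icc (0 : ℝ) 1) : γ s ∈ segment ℝ y z :=
    lineMap_mem_segment ℝ y z hs
  have hγ_sub (s : ℝ) : γ s - y = s • (z - y) := AffineMap.lineMap_vsub_left y z s
  have hgγ {s : ℝ} (hs : s ∈ Set.Icc (0 : ℝ) 1) :
      HasDerivAt (fun s ↦ g (γ s)) ⟪∇ g (γ s), z - y⟫ s :=
    (hg _ (hγ_mem hs)).hasGradientAt.hasFDerivAt.comp_hasDerivAt s AffineMap.hasDerivAt_lineMap
  have hq (s : ℝ) : HasDerivAt q (⟪∇ g y, z - y⟫ + s * (L * ‖z - y‖ ^ 2)) s := by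
    refine ((((hasDerivAt_id s).mul_const ⟪∇ g y, z - y⟫).add
      (((hasDerivAt_id s).pow 2).mul_const (L / 2 * ‖z - y‖ ^ 2))).const_add (g y)).congr_deriv ?_
    simp only [id]
    ring
  have hderiv {s : ℝ} (hs : s ∈ Set.Icc (0 : ℝ) 1) :
      ⟪∇ g (γ s), z - y⟫ ≤ ⟪∇ g y, z - y⟫ + s * (L * ‖z - y‖ ^ 2) := by
    rw [← sub_le_iff_le_add', ← inner_sub_left]
    calc ⟪∇ g (γ s) - ∇ g y, z - y⟫ ≤ ‖∇ g (γ s) - ∇ g y‖ * ‖z - y‖ := real_inner_le_norm _ _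
      _ ≤ L * ‖γ s - y‖ * ‖z - y‖ := by gcongr; exact hL _ (hγ_mem hs)
      _ = s * (L * ‖z - y‖ ^ 2) := by rw [hγ_sub, norm_smul, Real.norm_of_nonneg hs.1]; ring
  have hle : g (γ 1) ≤ q 1 :=
    image_le_of_deriv_right_le_deriv_boundary
      (fun s hs ↦ (hgγ hs).continuousAt.continuousWithinAt)
      (fun s hs ↦ (hgγ (Set.Ico_subset_Icc_self hs)).hasDerivWithinAt)
      (by simp [γ, q])
      (fun s _ ↦ (hq s).continuousAt.continuousWithinAt)
      (fun s _ ↦ (hq s).hasDerivWithinAt)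
      (fun s hs ↦ hderiv (Set.Ico_subset_Icc_self hs))
      (Set.right_mem_Icc.2 zero_le_one)
  simpa only [γ, q, AffineMap.lineMap_apply_one, one_mul, one_pow, add_assoc] using hle

/-- The Armijo condition, with constant `1 / 2`, for the gradient step of size `v` at `y`: the
acceptance test of the line search. -/
def SatisfiesArmijo (g : E → ℝ) (y : E) (v : ℝ) : Prop :=
  g (y - v • ∇ g y) ≤ g y - v / 2 * ‖∇ g y‖ ^ 2

/-- The step size `β ^ k` chosen by backtracking line search at `y`, with `k` the least exponent
passing the Armijo test; it is `btStep` on a general Hilbert space, with the same junk value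
`β ^ 0` if no exponent passes. -/
noncomputable def backtrackingStep (g : E → ℝ) (β : ℝ) (y : E) : ℝ :=
  β ^ sInf {k : ℕ | SatisfiesArmijo g y (β ^ k)}

theorem SatisfiesArmijo.le (h : SatisfiesArmijo g y v) (hv : 0 ≤ v) : g (y - v • ∇ g y) ≤ g y :=
  h.trans (sub_le_self _ (by positivity))

theorem satisfiesArmijo_of_mul_le_one (hv : 0 ≤ v) (hvL : v * L ≤ 1)
    (hg : ∀ w ∈ segment ℝ y (y - v • ∇ g y), DifferentiableAt ℝ g w)
    (hL : ∀ w ∈ segment ℝ y (y - v • ∇ g y), ‖∇ g w - ∇ g y‖ ≤ L * ‖w - y‖) :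
    SatisfiesArmijo g y v := by
  have hdescent := le_add_inner_gradient_add_sq_of_norm_gradient_sub_le hg hL
  rw [sub_sub_cancel_left, inner_neg_right, real_inner_smul_right, real_inner_self_eq_norm_sq,
    norm_neg, norm_smul, Real.norm_of_nonneg hv] at hdescent
  calc g (y - v • ∇ g y) ≤ g y + -(v * ‖∇ g y‖ ^ 2) + L / 2 * (v * ‖∇ g y‖) ^ 2 := hdescent
    _ = g y - v * ‖∇ g y‖ ^ 2 + v * L * (v / 2 * ‖∇ g y‖ ^ 2) := by ring
    _ ≤ g y - v * ‖∇ g y‖ ^ 2 + 1 * (v / 2 * ‖∇ g y‖ ^ 2) := by gcongr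
    _ = g y - v / 2 * ‖∇ g y‖ ^ 2 := by ring

theorem satisfiesArmijo_pow_of_pow_le_inv (hβ : β ∈ Set.Icc 0 1) (hL0 : 0 < L)
    (hg : ∀ w ∈ segment ℝ y (y - ∇ g y), DifferentiableAt ℝ g w)
    (hL : ∀ w ∈ segment ℝ y (y - ∇ g y), ‖∇ g w - ∇ g y‖ ≤ L * ‖w - y‖)
    (k : ℕ) (hk : β ^ k ≤ L⁻¹) : SatisfiesArmijo g y (β ^ k) := by
  have hmem : y - β ^ k • ∇ g y ∈ segment ℝ y (y - ∇ g y) := by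
    rw [segment_eq_image']
    exact ⟨β ^ k, ⟨pow_nonneg hβ.1 k, pow_le_one₀ hβ.1 hβ.2⟩, by
      simp only [sub_sub_cancel_left, smul_neg, ← sub_eq_add_neg]⟩
  have hsegment : segment ℝ y (y - β ^ k • ∇ g y) ⊆ segment ℝ y (y - ∇ g y) :=
    (convex_segment y _).segment_subset (left_mem_segment ℝ y _) hmem
  exact satisfiesArmijo_of_mul_le_one (pow_nonneg hβ.1 k) ((le_div_iff₀ hL0).1 (by rwa [one_div]))
    (fun w hw ↦ hg w (hsegment hw)) fun w hw ↦ hL w (hsegment hw)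

theorem satisfiesArmijo_backtrackingStep (h : ∃ k : ℕ, SatisfiesArmijo g y (β ^ k)) :
    SatisfiesArmijo g y (backtrackingStep g β y) :=
  Nat.sInf_mem (s := {k : ℕ | SatisfiesArmijo g y (β ^ k)}) h

theorem apply_le_apply_zero_of_forall_exists_satisfiesArmijo (hβ : 0 ≤ β) {x : ℕ → E}
    (hx : ∀ t, x (t + 1) = x t - backtrackingStep g β (x t) • ∇ g (x t))
    (hsearch : ∀ y, g y ≤ g (x 0) → ∃ k : ℕ, SatisfiesArmijo g y (β ^ k)) (t : ℕ) :
    g (x t) ≤ g (x 0) := by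
  induction t with
  | zero => exact le_rfl
  | succ t ih =>
    rw [hx]
    exact ((satisfiesArmijo_backtrackingStep (hsearch _ ih)).le (pow_nonneg hβ _)).trans ih

theorem stmt13_general {K : Set E} {x : ℕ → E} (hβ : β ∈ Set.Ioo 0 1) (hβL : β ≤ L)
    (hx : ∀ t, x (t + 1) = x t - backtrackingStep g β (x t) • ∇ g (x t))
    (hK : ∀ y, g y ≤ g (x 0) → segment ℝ y (y - ∇ g y) ⊆ K)
    (hg : ∀ y ∈ K, DifferentiableAt ℝ g y)
    (hLip : ∀ y ∈ K, ∀ z ∈ K, ‖∇ g y - ∇ g z‖ ≤ L * ‖y - z‖) (t : ℕ) :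
    (∃ k : ℕ, SatisfiesArmijo g (x t) (β ^ k)) ∧
      β / L ≤ backtrackingStep g β (x t) ∧
      g (x (t + 1)) ≤ g (x t) - backtrackingStep g β (x t) / 2 * ‖∇ g (x t)‖ ^ 2 := by
  have hL0 : 0 < L := hβ.1.trans_le hβL
  have haccept (y : E) (hy : g y ≤ g (x 0)) :
      ∀ k : ℕ, β ^ k ≤ L⁻¹ → SatisfiesArmijo g y (β ^ k) :=
    satisfiesArmijo_pow_of_pow_le_inv (Set.Ioo_subset_Icc_self hβ) hL0
      (fun w hw ↦ hg w (hK y hy hw))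
      fun w hw ↦ hLip w (hK y hy hw) y (hK y hy (left_mem_segment ℝ y _))
  have hsearch (y : E) (hy : g y ≤ g (x 0)) : ∃ k : ℕ, SatisfiesArmijo g y (β ^ k) :=
    nonempty_of_forall_pow_le (inv_pos.2 hL0) hβ.2 (haccept y hy)
  have hsublevel : g (x t) ≤ g (x 0) :=
    apply_le_apply_zero_of_forall_exists_satisfiesArmijo hβ.1.le hx hsearch t
  refine ⟨hsearch _ hsublevel, ?_, ?_⟩
  · exact mul_le_pow_sInf_of_forall_pow_le hβ.1.le (div_le_one_of_le₀ hβL hL0.le)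
      (haccept _ hsublevel)
  · rw [hx]
    exact satisfiesArmijo_backtrackingStep (hsearch _ hsublevel)

end Armijo

/-- validity of backtracking line search. Let g : ℝ^d → ℝ be
differentiable, β ∈ (0,1), K̃ a convex set containing the sublevel set {g ≤ g(x₀)}, and
K = {x | ∃ x' ∈ K̃, ‖x − x'‖ ≤ sup_{x̃∈K̃}‖∇g(x̃)‖} (the supremum is taken in [0,∞], so
K = ℝ^d if it is infinite). If g is convex on K and ∇g is L_K-Lipschitz on K with
L_K ∈ [1,∞), then for every t ≥ 1 the backtracking step at x_{t−1} is well defined (some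
k ∈ ℕ satisfies the Armijo condition), the chosen step size satisfies v_t ≥ β/L_K, and
g(x_t) ≤ g(x_{t−1}) − (v_t/2)‖∇g(x_{t−1})‖². -/
theorem stmt13 {d : ℕ}
    (g : EuclideanSpace ℝ (Fin d) → ℝ) (hg : Differentiable ℝ g)
    (x0 : EuclideanSpace ℝ (Fin d)) (β : ℝ) (hβ : β ∈ Set.Ioo (0 : ℝ) 1)
    (Kt : Set (EuclideanSpace ℝ (Fin d))) (hKt : Convex ℝ Kt)
    (hsub : {x | g x ≤ g x0} ⊆ Kt)
    (K : Set (EuclideanSpace ℝ (Fin d)))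
    (hKdef : K = {x | ∃ x' ∈ Kt,
      ENNReal.ofReal ‖x - x'‖ ≤ ⨆ y : Kt, ENNReal.ofReal ‖gradient g (y : EuclideanSpace ℝ (Fin d))‖})
    (hconv : ConvexOn ℝ K g)
    (L : ℝ) (hL : 1 ≤ L)
    (hLip : ∀ x ∈ K, ∀ x' ∈ K, ‖gradient g x - gradient g x'‖ ≤ L * ‖x - x'‖) :
    ∀ t : ℕ, 1 ≤ t →
      (armijoSet g β (btIter g β x0 (t - 1))).Nonempty ∧
      β / L ≤ btStep g β (btIter g β x0 (t - 1)) ∧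
      g (btIter g β x0 t) ≤ g (btIter g β x0 (t - 1)) -
        btStep g β (btIter g β x0 (t - 1)) / 2 *
          ‖gradient g (btIter g β x0 (t - 1))‖ ^ 2 := by
  rintro (_ | t) ht
  · exact absurd ht (by decide)
  · exact stmt13_general hβ (hβ.2.le.trans hL) (fun _ ↦ rfl) (hKdef ▸ fun y hy ↦
      segment_sub_subset_setOf_norm_sub_le_iSup (gradient g) (hsub hy)) (fun y _ ↦ hg y) hLip t
end
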